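/- The system of vector-valued functions { (1/√(2π))·(1, −i)ᵀ e^{i(2n)x}, (1/√(2π))·(1, i)ᵀ e^{−i(2n)x} : n ∈ ℤ } is an orthonormal basis of L²([0,π], ℂ²). -/

import Mathlib

open MeasureTheory

/-!
The family is a tensor product: `ℂ²` has the orthonormal basis `(1/√2)(1, ∓i)ᵀ`, and
`e^{±2inx}/√π` is, for either choice of sign, the Fourier basis of `L²([0, π])` up to the
reindexing `n ↦ -n`. In general, if `v i` is a countable Hilbert basis of `E` and, for each `i`,
`φ i` is a Hilbert basis of the scalar space `L²(μ)`, then the functions `φ i k • v i` form a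
Hilbert basis of `L²(μ; E)`: orthonormality is immediate, and a function `f` orthogonal to all of
them has components `⟪v i, f ·⟫` orthogonal to `φ i`, hence zero almost everywhere.
-/

open scoped InnerProductSpace
open Submodule (span)

section HilbertBasis

variable {ι ι' 𝕜 E : Type*} [RCLike 𝕜] [NormedAddCommGroup E] [InnerProductSpace 𝕜 E]

theorem orthogonal_span_range_eq_bot_iff {v : ι → E} :
    (span 𝕜 (Set.range v))ᗮ = ⊥ ↔ ∀ x, (∀ i, ⟪v i, x⟫_𝕜 = 0) → x = 0 := by
  have hmem (x : E) : x ∈ (span 𝕜 (Set.range v))ᗮ ↔ ∀ i, ⟪v i, x⟫_𝕜 = 0 := by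
    rw [← Submodule.span_singleton_le_iff_mem, ← Submodule.isOrtho_iff_le, Submodule.isOrtho_comm,
      Submodule.isOrtho_span]
    simp only [Set.forall_mem_range, Set.mem_singleton_iff, forall_eq]
  simp only [Submodule.eq_bot_iff, hmem]

theorem hilbertBasis_orthogonal_span_eq_bot [CompleteSpace E] (b : HilbertBasis ι 𝕜 E) :
    (span 𝕜 (Set.range b))ᗮ = ⊥ :=
  (Submodule.topologicalClosure_eq_top_iff).1 b.dense_span

/-- The Hilbert basis `b` with its index set relabelled along `e`. -/
noncomputable def reindexHilbertBasis [CompleteSpace E] (b : HilbertBasis ι 𝕜 E) (e : ι' ≃ ι) :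
    HilbertBasis ι' 𝕜 E :=
  HilbertBasis.mk (b.orthonormal.comp e e.injective) (by
    rw [EquivLike.range_comp, b.dense_span])

@[simp]
theorem reindexHilbertBasis_apply [CompleteSpace E] (b : HilbertBasis ι 𝕜 E) (e : ι' ≃ ι)
    (i : ι') : reindexHilbertBasis b e i = b (e i) := by
  simp only [reindexHilbertBasis, HilbertBasis.coe_mk, Function.comp_apply]

end HilbertBasis

section LpTensor

variable {α ι κ 𝕜 E : Type*} [RCLike 𝕜] [NormedAddCommGroup E] [InnerProductSpace 𝕜 E]
  [MeasurableSpace α] {μ : Measure α}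

/-- The elementary tensor `g ⊗ v`, that is, the function `x ↦ g x • v`, in the identification of
`L²(μ; E)` with the Hilbert tensor product of `L²(μ)` and `E`. -/
noncomputable def lpTensor (g : Lp 𝕜 2 μ) (v : E) : Lp E 2 μ :=
  (ContinuousLinearMap.toSpanSingleton 𝕜 v).compLp g

theorem coeFn_lpTensor (g : Lp 𝕜 2 μ) (v : E) : lpTensor g v =ᵐ[μ] fun x => g x • v :=
  (ContinuousLinearMap.toSpanSingleton 𝕜 v).coeFn_compLp' g

theorem inner_lpTensor_left (g : Lp 𝕜 2 μ) (v : E) (f : Lp E 2 μ) :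
    ⟪lpTensor g v, f⟫_𝕜 = ⟪g, (innerSL 𝕜 v).compLp f⟫_𝕜 := by
  rw [L2.inner_def, L2.inner_def]
  refine integral_congr_ae ?_
  filter_upwards [coeFn_lpTensor g v, (innerSL 𝕜 v).coeFn_compLp f] with x hg hf
  rw [hg, hf, innerSL_apply_apply, inner_smul_left, RCLike.inner_apply']

theorem innerSL_compLp_lpTensor (v w : E) (g : Lp 𝕜 2 μ) :
    (innerSL 𝕜 v).compLp (lpTensor g w) = ⟪v, w⟫_𝕜 • g := by
  refine Lp.ext ?_
  filter_upwards [(innerSL 𝕜 v).coeFn_compLp (lpTensor g w), coeFn_lpTensor g w,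
    Lp.coeFn_smul ⟪v, w⟫_𝕜 g] with x hv hg hsmul
  rw [hv, hg, hsmul, innerSL_apply_apply, inner_smul_right, Pi.smul_apply, smul_eq_mul, mul_comm]

theorem inner_lpTensor_lpTensor (g h : Lp 𝕜 2 μ) (v w : E) :
    ⟪lpTensor g v, lpTensor h w⟫_𝕜 = ⟪v, w⟫_𝕜 * ⟪g, h⟫_𝕜 := by
  rw [inner_lpTensor_left, innerSL_compLp_lpTensor, inner_smul_right]

theorem orthonormal_lpTensor {g : ι → κ → Lp 𝕜 2 μ} (hg : ∀ i, Orthonormal 𝕜 (g i)) {v : ι → E}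
    (hv : Orthonormal 𝕜 v) : Orthonormal 𝕜 fun p : κ × ι => lpTensor (g p.2 p.1) (v p.2) := by
  classical
  rw [orthonormal_iff_ite]
  rintro ⟨k, i⟩ ⟨l, j⟩
  rw [inner_lpTensor_lpTensor, orthonormal_iff_ite.1 hv]
  rcases eq_or_ne i j with rfl | hij
  · simp only [if_true, one_mul, Prod.mk.injEq, and_true, orthonormal_iff_ite.1 (hg i)]
  · simp only [hij, if_false, zero_mul, Prod.mk.injEq, and_false]

theorem eq_zero_of_forall_innerSL_compLp_eq_zero [Countable ι] {p : ENNReal} {v : ι → E}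
    (hv : (span 𝕜 (Set.range v))ᗮ = ⊥) {f : Lp E p μ}
    (h : ∀ i, (innerSL 𝕜 (v i)).compLp f = 0) : f = 0 := by
  have hinner : ∀ᵐ x ∂μ, ∀ i, ⟪v i, f x⟫_𝕜 = 0 := by
    refine ae_all_iff.2 fun i => ?_
    filter_upwards [(innerSL 𝕜 (v i)).coeFn_compLp f, (Lp.eq_zero_iff_ae_eq_zero).1 (h i)]
      with x hx hzero
    rw [← innerSL_apply_apply, ← hx, hzero, Pi.zero_apply]
  rw [Lp.eq_zero_iff_ae_eq_zero]
  filter_upwards [hinner] with x hx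
  exact orthogonal_span_range_eq_bot_iff.1 hv (f x) hx

theorem orthogonal_span_lpTensor_eq_bot [Countable ι] {g : ι → κ → Lp 𝕜 2 μ}
    (hg : ∀ i, (span 𝕜 (Set.range (g i)))ᗮ = ⊥) {v : ι → E}
    (hv : (span 𝕜 (Set.range v))ᗮ = ⊥) :
    (span 𝕜 (Set.range fun p : κ × ι => lpTensor (g p.2 p.1) (v p.2)))ᗮ = ⊥ := by
  refine orthogonal_span_range_eq_bot_iff.2 fun f hf =>
    eq_zero_of_forall_innerSL_compLp_eq_zero hv fun i => ?_
  refine orthogonal_span_range_eq_bot_iff.1 (hg i) _ fun k => ?_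
  rw [← inner_lpTensor_left]
  exact hf (k, i)

/-- The Hilbert basis `φ i k ⊗ v i` of `L²(μ; E)`. The scalar basis `φ i` may depend on the
vector `v i` it multiplies. -/
noncomputable def lpTensorHilbertBasis [CompleteSpace E] [Countable ι]
    (φ : ι → HilbertBasis κ 𝕜 (Lp 𝕜 2 μ)) (v : HilbertBasis ι 𝕜 E) :
    HilbertBasis (κ × ι) 𝕜 (Lp E 2 μ) :=
  HilbertBasis.mkOfOrthogonalEqBot
    (orthonormal_lpTensor (fun i => (φ i).orthonormal) v.orthonormal)
    (orthogonal_span_lpTensor_eq_bot (fun i => hilbertBasis_orthogonal_span_eq_bot (φ i))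
      (hilbertBasis_orthogonal_span_eq_bot v))

theorem coeFn_lpTensorHilbertBasis [CompleteSpace E] [Countable ι]
    (φ : ι → HilbertBasis κ 𝕜 (Lp 𝕜 2 μ)) (v : HilbertBasis ι 𝕜 E) (k : κ) (i : ι) :
    lpTensorHilbertBasis φ v (k, i) =ᵐ[μ] fun x => φ i k x • v i := by
  rw [lpTensorHilbertBasis, HilbertBasis.coe_mkOfOrthogonalEqBot]
  exact coeFn_lpTensor _ _

end LpTensor

section FourierIcc

variable {a b : ℝ}

theorem fourierCoeffOn_coe_addCircle {E : Type*} [NormedAddCommGroup E] [NormedSpace ℂ E]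
    (hab : a < b) [Fact (0 < b - a)] (g : AddCircle (b - a) → E) :
    fourierCoeffOn hab (fun x => g x) = fourierCoeff g := by
  ext n
  rw [fourierCoeffOn_eq_integral, fourierCoeff_eq_intervalIntegral _ n a, add_sub_cancel]

theorem ae_eq_zero_of_forall_fourierCoeffOn_eq_zero (hab : a < b) {f : ℝ → ℂ}
    (hf : MemLp f 2 (volume.restrict (Set.Icc a b))) (h : ∀ n, fourierCoeffOn hab f n = 0) :
    f =ᵐ[volume.restrict (Set.Icc a b)] 0 := by
  rw [← restrict_Ioc_eq_restrict_Icc] at hf ⊢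
  have hnorm : ∫ x in Set.Ioc a b, ‖f x‖ ^ 2 = 0 := by
    have hparseval := tsum_sq_fourierCoeffOn hab hf
    simp only [h, norm_zero, ne_eq, OfNat.ofNat_ne_zero, not_false_eq_true, zero_pow, tsum_zero,
      intervalIntegral.integral_of_le hab.le] at hparseval
    exact (smul_eq_zero.1 hparseval.symm).resolve_left (inv_ne_zero (sub_ne_zero.2 hab.ne'))
  rw [integral_eq_zero_iff_of_nonneg (fun x => by positivity)
    (hf.integrable_norm_pow two_ne_zero)] at hnorm
  filter_upwards [hnorm] with x hx
  simpa using hx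

theorem ofReal_sqrt_sub_ne_zero (hab : a < b) : (√(b - a) : ℂ) ≠ 0 :=
  Complex.ofReal_ne_zero.2 (Real.sqrt_ne_zero'.2 (sub_pos.2 hab))

variable (a b) in
/-- The Fourier monomial `x ↦ e^{2πinx/(b-a)}/√(b-a)`, which has norm one in `L²([a, b])` when
`a < b`. -/
noncomputable def fourierIcc (n : ℤ) (x : ℝ) : ℂ :=
  (√(b - a) : ℂ)⁻¹ * fourier n (x : AddCircle (b - a))

theorem fourierCoeffOn_fourierIcc (hab : a < b) (n : ℤ) :
    fourierCoeffOn hab (fourierIcc a b n) = (√(b - a) : ℂ)⁻¹ • Pi.single n 1 := by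
  have : Fact (0 < b - a) := ⟨sub_pos.2 hab⟩
  rw [← fourierCoeff_fourier (T := b - a), ← fourierCoeffOn_coe_addCircle hab]
  exact funext fun m => fourierCoeffOn.const_mul _ _ m hab

theorem continuous_fourierIcc (n : ℤ) : Continuous (fourierIcc a b n) :=
  continuous_const.mul ((fourier n).continuous.comp (AddCircle.continuous_mk' (b - a)))

theorem memLp_fourierIcc (p : ENNReal) (n : ℤ) :
    MemLp (fourierIcc a b n) p (volume.restrict (Set.Icc a b)) := by
  refine MemLp.of_bound (continuous_fourierIcc n).aestronglyMeasurable ‖(√(b - a) : ℂ)⁻¹‖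
    (.of_forall fun x => ?_)
  rw [fourierIcc, norm_mul, fourier_apply, Circle.norm_coe, mul_one]

variable (a b) in
/-- The Fourier monomial `fourierIcc a b n` as an element of `L²([a, b])`. -/
noncomputable def fourierIccLp (n : ℤ) : Lp ℂ 2 (volume.restrict (Set.Icc a b)) :=
  (memLp_fourierIcc 2 n).toLp

theorem coeFn_fourierIccLp (n : ℤ) :
    fourierIccLp a b n =ᵐ[volume.restrict (Set.Icc a b)] fourierIcc a b n :=
  (memLp_fourierIcc 2 n).coeFn_toLp

theorem inner_fourierIccLp_left (hab : a < b) (n : ℤ)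
    (f : Lp ℂ 2 (volume.restrict (Set.Icc a b))) :
    ⟪fourierIccLp a b n, f⟫_ℂ = √(b - a) * fourierCoeffOn hab f n := by
  have hsqrt : (√(b - a) : ℂ)⁻¹ = √(b - a) * (1 / (b - a) : ℝ) := by
    rw [← Complex.ofReal_inv, ← Complex.ofReal_mul, mul_one_div, Real.sqrt_div_self]
  rw [fourierCoeffOn_eq_integral, Complex.real_smul, ← mul_assoc, ← hsqrt, L2.inner_def,
    intervalIntegral.integral_of_le hab.le, restrict_Ioc_eq_restrict_Icc, ← integral_const_mul]
  refine integral_congr_ae ?_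
  filter_upwards [coeFn_fourierIccLp n] with x hx
  rw [hx, fourierIcc, RCLike.inner_apply', map_mul, map_inv₀, Complex.conj_ofReal, fourier_neg,
    smul_eq_mul, mul_assoc]

theorem orthonormal_fourierIccLp (hab : a < b) : Orthonormal ℂ (fourierIccLp a b) := by
  rw [orthonormal_iff_ite]
  intro m n
  have hae : fourierIccLp a b n =ᵐ[volume.restrict (Set.Ioc a b)] fourierIcc a b n := by
    rw [restrict_Ioc_eq_restrict_Icc]
    exact coeFn_fourierIccLp n
  rw [inner_fourierIccLp_left hab, fourierCoeffOn_congr_ae hab hae, fourierCoeffOn_fourierIcc hab,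
    Pi.smul_apply, smul_eq_mul, mul_inv_cancel_left₀ (ofReal_sqrt_sub_ne_zero hab),
    Pi.single_apply]

theorem orthogonal_span_fourierIccLp_eq_bot (hab : a < b) :
    (span ℂ (Set.range (fourierIccLp a b)))ᗮ = ⊥ := by
  refine orthogonal_span_range_eq_bot_iff.2 fun f hf => ?_
  rw [Lp.eq_zero_iff_ae_eq_zero]
  refine ae_eq_zero_of_forall_fourierCoeffOn_eq_zero hab (Lp.memLp f) fun n => ?_
  have hinner := hf n
  rw [inner_fourierIccLp_left hab] at hinner
  exact (mul_eq_zero.1 hinner).resolve_left (ofReal_sqrt_sub_ne_zero hab)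

/-- The Fourier basis of `L²([a, b])`, consisting of the functions `fourierIcc a b n`. -/
noncomputable def fourierIccBasis (hab : a < b) :
    HilbertBasis ℤ ℂ (Lp ℂ 2 (volume.restrict (Set.Icc a b))) :=
  HilbertBasis.mkOfOrthogonalEqBot (orthonormal_fourierIccLp hab)
    (orthogonal_span_fourierIccLp_eq_bot hab)

theorem coeFn_fourierIccBasis (hab : a < b) (n : ℤ) :
    fourierIccBasis hab n =ᵐ[volume.restrict (Set.Icc a b)] fourierIcc a b n := by
  rw [fourierIccBasis, HilbertBasis.coe_mkOfOrthogonalEqBot]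
  exact coeFn_fourierIccLp n

end FourierIcc

section Dirac

/-- The spinor `(1/√2)(1, -i)ᵀ` for `j = false` and `(1/√2)(1, i)ᵀ` for `j = true`: the constant
vector factor of the eigenfunctions of the free Dirac operator. -/
noncomputable def diracSpinor (j : Bool) : EuclideanSpace ℂ (Fin 2) :=
  (√2 : ℂ)⁻¹ • !₂[1, if j then Complex.I else -Complex.I]

theorem smul_diracSpinor (c : ℂ) (j : Bool) :
    c • diracSpinor j = (√2 : ℂ)⁻¹ • !₂[c, (if j then Complex.I else -Complex.I) * c] := by
  rw [diracSpinor, smul_comm]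
  congr 1
  ext i
  fin_cases i
  · exact mul_one c
  · exact mul_comm c _

theorem orthonormal_diracSpinor : Orthonormal ℂ diracSpinor := by
  have hsqrt : (√2 : ℂ)⁻¹ * (√2 : ℂ)⁻¹ = 2⁻¹ := by
    rw [← mul_inv, ← Complex.ofReal_mul, Real.mul_self_sqrt zero_le_two, Complex.ofReal_ofNat]
  rw [orthonormal_iff_ite]
  intro j k
  simp only [diracSpinor, inner_smul_left, inner_smul_right, map_inv₀, Complex.conj_ofReal,
    ← mul_assoc, hsqrt]
  cases j <;> cases k <;> norm_num [PiLp.inner_apply, Fin.sum_univ_two, -inner_self_eq_norm_sq_to_K]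

/-- The spinors `diracSpinor j` as an orthonormal basis of `ℂ²`. -/
noncomputable def diracSpinorBasis : OrthonormalBasis Bool ℂ (EuclideanSpace ℂ (Fin 2)) :=
  OrthonormalBasis.mk orthonormal_diracSpinor
    (orthonormal_diracSpinor.linearIndependent.span_eq_top_of_card_eq_finrank (by simp)).ge

/-- The Hilbert basis `e^{±2inx}/√π ⊗ diracSpinor j` of `L²([0, π], ℂ²)`, with the sign `-` for
`j = true`. -/
noncomputable def diracHilbertBasis : HilbertBasis (ℤ × Bool) ℂ
    (Lp (EuclideanSpace ℂ (Fin 2)) 2 (volume.restrict (Set.Icc (0 : ℝ) Real.pi))) :=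
  lpTensorHilbertBasis
    (fun j => reindexHilbertBasis (fourierIccBasis Real.pi_pos)
      (if j then Equiv.neg ℤ else Equiv.refl ℤ))
    diracSpinorBasis.toHilbertBasis

theorem coeFn_diracHilbertBasis (n : ℤ) (j : Bool) :
    diracHilbertBasis (n, j) =ᵐ[volume.restrict (Set.Icc (0 : ℝ) Real.pi)]
      fun x => fourierIcc 0 Real.pi (if j then -n else n) x • diracSpinor j := by
  have htensor : diracHilbertBasis (n, j) =ᵐ[volume.restrict (Set.Icc (0 : ℝ) Real.pi)] _ :=
    coeFn_lpTensorHilbertBasis _ _ n j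
  filter_upwards [htensor, coeFn_fourierIccBasis Real.pi_pos (if j then -n else n)] with x hx hn
  rw [hx, ← hn, reindexHilbertBasis_apply, OrthonormalBasis.coe_toHilbertBasis,
    diracSpinorBasis, OrthonormalBasis.coe_mk]
  cases j <;> rfl

theorem fourierIcc_zero_pi (n : ℤ) (x : ℝ) :
    fourierIcc 0 Real.pi n x = (√Real.pi : ℂ)⁻¹ * Complex.exp (Complex.I * (2 * n) * x) := by
  have hpi : (Real.pi : ℂ) ≠ 0 := Complex.ofReal_ne_zero.2 Real.pi_ne_zero
  rw [fourierIcc, fourier_coe_apply, sub_zero]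
  congr 2
  field_simp

end Dirac

/-- The system `{ (1/√(2π))(1,−i)ᵀ e^{2inx}, (1/√(2π))(1,i)ᵀ e^{−2inx} : n ∈ ℤ }`
(eigenfunctions of the free Dirac operator with periodic boundary conditions)
is an orthonormal basis of `L²([0,π], ℂ²)`. Index `(n, false)` corresponds to
the first family and `(n, true)` to the second. -/
theorem stmt6 :
    ∃ b : HilbertBasis (ℤ × Bool) ℂ
        (Lp (EuclideanSpace ℂ (Fin 2)) 2 (volume.restrict (Set.Icc (0:ℝ) Real.pi))),
      ∀ n : ℤ, ∀ j : Bool,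
        (b (n, j) : Lp (EuclideanSpace ℂ (Fin 2)) 2 (volume.restrict (Set.Icc (0:ℝ) Real.pi)))
          =ᵐ[volume.restrict (Set.Icc (0:ℝ) Real.pi)]
        fun x : ℝ =>
          ((Real.sqrt (2 * Real.pi) : ℂ))⁻¹ •
            (WithLp.equiv 2 (Fin 2 → ℂ)).symm
              ![Complex.exp ((if j then -1 else 1) * Complex.I * (2 * (n : ℂ)) * (x : ℂ)),
                (if j then Complex.I else -Complex.I) *
                  Complex.exp ((if j then -1 else 1) * Complex.I * (2 * (n : ℂ)) * (x : ℂ))] := by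
  refine ⟨diracHilbertBasis, fun n j => ?_⟩
  have hsqrt : (√(2 * Real.pi) : ℂ)⁻¹ = (√Real.pi : ℂ)⁻¹ * (√2 : ℂ)⁻¹ := by
    rw [Real.sqrt_mul zero_le_two, Complex.ofReal_mul, mul_inv_rev]
  have hexponent : Complex.I * (2 * ((if j then -n else n : ℤ) : ℂ)) =
      (if j then -1 else 1) * Complex.I * (2 * (n : ℂ)) := by
    cases j <;> simp
  filter_upwards [coeFn_diracHilbertBasis n j] with x hx
  rw [hx, fourierIcc_zero_pi, hexponent, mul_smul, smul_diracSpinor, smul_smul, hsqrt]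
  rfl
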